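/- Let V be a b-complete semimodule over a b-complete idempotent semiring K, let Δ(V) be the set of δ-functionals on V, let i_Δ : V → K(Δ(V)) be the map (i_Δ(v))(φ) = φ(v), and let Id denote the identity map on the functional semimodule i_Δ(V). Then the identity operator id : V → V is b-nuclear if and only if i_Δ is an embedding (injective and an isomorphism onto its image i_Δ(V)) and the operator Id : i_Δ(V) → i_Δ(V) is integral. -/

import Mathlib

/-
Common definitions: b-complete idempotent semirings, b-complete idempotent
semimodules, functional semimodules, b-linear / integral / one-dimensional /
b-nuclear maps, δ-functionals, kernel theorems.
-/

open Set

universe u v w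

section Defs

variable {K : Type*} [IdemSemiring K] {X Y : Type*}

/-- `K` is a b-complete idempotent semiring: every nonempty bounded-above subset of `K`
has a least upper bound, and multiplication on either side distributes over suprema of
nonempty bounded-above subsets. -/
structure IsBCompleteSemiring (K : Type*) [IdemSemiring K] : Prop where
  exists_lub : ∀ s : Set K, s.Nonempty → BddAbove s → ∃ a, IsLUB s a
  mul_left_lub : ∀ (c : K) (s : Set K) (a : K), s.Nonempty → IsLUB s a →
    IsLUB ((fun x => c * x) '' s) (c * a)
  mul_right_lub : ∀ (c : K) (s : Set K) (a : K), s.Nonempty → IsLUB s a →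
    IsLUB ((fun x => x * c) '' s) (a * c)

/-- `a` is the supremum of `S` computed *inside* the subset `V` of an ordered type:
`a` lies in `V`, `a` is an upper bound of `S`, and `a` is below every upper bound of `S`
that lies in `V`. -/
def IsLUBWithin {α : Type*} [Preorder α] (V S : Set α) (a : α) : Prop :=
  a ∈ V ∧ a ∈ upperBounds S ∧ ∀ b ∈ V, b ∈ upperBounds S → a ≤ b

/-- A functional semimodule on `X`: a subset of `K(X)` invariant under multiplication by
scalars from `K` which is an upper semilattice in the induced (pointwise) order; its
addition is `f ⊕ g = sup {f, g}`, the supremum being taken inside `V`. -/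
structure IsFunctionalSemimodule (V : Set (X → K)) : Prop where
  smul_mem : ∀ (c : K), ∀ f ∈ V, c • f ∈ V
  pair_lub : ∀ f ∈ V, ∀ g ∈ V, ∃ h, IsLUBWithin V {f, g} h

/-- A b-complete functional semimodule on `X`: every nonempty subset bounded above (by an
element of `V`) has a supremum in `V`; scalar multiplication by a fixed `c ∈ K` preserves
such suprema; and for fixed `f ∈ V` the map `c ↦ c • f` sends suprema of nonempty
bounded-above subsets of `K` to suprema of their images. -/
structure IsBCompleteFunctionalSemimodule (V : Set (X → K)) extends
    IsFunctionalSemimodule V : Prop where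
  exists_lub : ∀ S ⊆ V, S.Nonempty → (∃ b ∈ V, b ∈ upperBounds S) → ∃ a, IsLUBWithin V S a
  smul_lub : ∀ (c : K) (S : Set (X → K)) (a : X → K), S ⊆ V → S.Nonempty →
    IsLUBWithin V S a → IsLUBWithin V ((fun f => c • f) '' S) (c • a)
  act_lub : ∀ f ∈ V, ∀ (s : Set K) (a : K), s.Nonempty → BddAbove s → IsLUB s a →
    IsLUBWithin V ((fun c => c • f) '' s) (a • f)

/-- `V` is a b-subsemimodule of `K(X)`: the embedding `V → K(X)` preserves sums
(the sum in `V` of `f, g ∈ V`, i.e. the supremum of `{f, g}` taken inside `V`, is the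
pointwise sum `f + g`) and preserves suprema of nonempty bounded-above subsets
(suprema taken inside `V` are suprema in `K(X)`). -/
structure IsBSubsemimodule (V : Set (X → K)) : Prop where
  add_eq : ∀ f ∈ V, ∀ g ∈ V, ∀ h, IsLUBWithin V {f, g} h → h = f + g
  lub_preserved : ∀ S ⊆ V, S.Nonempty → ∀ a, IsLUBWithin V S a → IsLUB S a

/-- A functional ∧-semimodule: a functional semimodule containing the zero function and
closed under pointwise infima (computed in `K(X)`) of arbitrary nonempty subsets. -/
structure IsFunctionalWedgeSemimodule (V : Set (X → K)) extends
    IsFunctionalSemimodule V : Prop where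
  zero_mem : (0 : X → K) ∈ V
  inf_mem : ∀ S ⊆ V, S.Nonempty → ∀ g : X → K,
    (∀ x : X, IsGLB ((fun f => f x) '' S) (g x)) → g ∈ V

/-- `V ⊆ K(X)` is non-degenerate: at every point some member of `V` takes the value `1`. -/
def IsNonDegenerate (V : Set (X → K)) : Prop :=
  ∀ x : X, ∃ g ∈ V, g x = 1

/-- `V ⊆ K(X)` is admissible: for every `f ∈ V` and `x ∈ X` there is `g ∈ V` with
`g x = 1` and `f x • g ≤ f`. -/
def IsAdmissible (V : Set (X → K)) : Prop :=
  ∀ f ∈ V, ∀ x : X, ∃ g ∈ V, g x = 1 ∧ f x • g ≤ f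

/-- An (abstract) b-complete idempotent semimodule over `K`: the partial order is the
canonical one (`x ≤ y ↔ x + y = y`, which forces addition to be idempotent), every
nonempty bounded-above subset has a least upper bound, scalar multiplication by a fixed
`c ∈ K` preserves such suprema, and for fixed `w` the map `c ↦ c • w` sends suprema of
nonempty bounded-above subsets of `K` to suprema of their images. -/
structure IsBCompleteSemimodule (K W : Type*) [IdemSemiring K] [AddCommMonoid W]
    [PartialOrder W] [Module K W] : Prop where
  le_iff_add : ∀ x y : W, x ≤ y ↔ x + y = y
  exists_lub : ∀ s : Set W, s.Nonempty → BddAbove s → ∃ a, IsLUB s a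
  smul_lub : ∀ (c : K) (s : Set W) (a : W), s.Nonempty → IsLUB s a →
    IsLUB ((fun x => c • x) '' s) (c • a)
  act_lub : ∀ (w : W) (s : Set K) (a : K), s.Nonempty → BddAbove s → IsLUB s a →
    IsLUB ((fun c => c • w) '' s) (a • w)

/-- A b-linear map between (abstract) semimodules over `K`: it commutes with scalar
multiplication and sends suprema of nonempty bounded-above subsets to suprema of their
images. -/
structure IsBLinearMap (K : Type*) {V W : Type*} [IdemSemiring K]
    [AddCommMonoid V] [PartialOrder V] [Module K V]
    [AddCommMonoid W] [PartialOrder W] [Module K W] (A : V → W) : Prop where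
  map_smul : ∀ (c : K) (v : V), A (c • v) = c • A v
  map_lub : ∀ s : Set V, s.Nonempty → BddAbove s → ∀ a, IsLUB s a → IsLUB (A '' s) (A a)

/-- A one-dimensional (rank 1) map `V → W`: `v ↦ φ v • w` for a b-linear functional `φ`
and a fixed `w ∈ W`. -/
def IsOneDimMap (K : Type*) {V W : Type*} [IdemSemiring K]
    [AddCommMonoid V] [PartialOrder V] [Module K V]
    [AddCommMonoid W] [PartialOrder W] [Module K W] (g : V → W) : Prop :=
  ∃ (φ : V → K) (w : W), IsBLinearMap K φ ∧ ∀ v : V, g v = φ v • w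

/-- A b-nuclear map `V → W`: the pointwise supremum of a set `G` of one-dimensional maps
such that `{g v : g ∈ G}` is bounded above for every `v`. -/
def IsBNuclearMap (K : Type*) {V W : Type*} [IdemSemiring K]
    [AddCommMonoid V] [PartialOrder V] [Module K V]
    [AddCommMonoid W] [PartialOrder W] [Module K W] (A : V → W) : Prop :=
  ∃ G : Set (V → W), (∀ g ∈ G, IsOneDimMap K g) ∧
    ∀ v : V, BddAbove ((fun g => g v) '' G) ∧ IsLUB ((fun g => g v) '' G) (A v)

/-- A δ-functional on an (abstract) semimodule `V`: a b-linear functional `φ : V → K`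
such that `φ w • v ≤ w` for some fixed `v ∈ V` and all `w ∈ V`. -/
def IsDeltaFunctional (K : Type*) {V : Type*} [IdemSemiring K]
    [AddCommMonoid V] [PartialOrder V] [Module K V] (φ : V → K) : Prop :=
  IsBLinearMap K φ ∧ ∃ v : V, ∀ w : V, φ w • v ≤ w

/-- The set `Δ(V)` of δ-functionals on `V`, as a type. -/
def DeltaSet (K V : Type*) [IdemSemiring K]
    [AddCommMonoid V] [PartialOrder V] [Module K V] : Type _ :=
  {φ : V → K // IsDeltaFunctional K φ}

/-- The natural map `i_Δ : V → K(Δ(V))`, `(i_Δ v) φ = φ v`. -/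
def iDelta (K V : Type*) [IdemSemiring K]
    [AddCommMonoid V] [PartialOrder V] [Module K V] : V → (DeltaSet K V → K) :=
  fun v φ => φ.1 v

/-- A b-linear operator on a functional semimodule `V ⊆ K(X)` with values in an abstract
semimodule `W`: it commutes with scalar multiplication and sends suprema (taken inside
`V`) of nonempty bounded-above subsets of `V` to suprema of their images in `W`. -/
structure IsBLinearOn {K X : Type*} [IdemSemiring K] {W : Type*} [AddCommMonoid W]
    [PartialOrder W] [Module K W] (V : Set (X → K)) (A : (X → K) → W) : Prop where
  map_smul : ∀ (c : K), ∀ f ∈ V, A (c • f) = c • A f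
  map_lub : ∀ S ⊆ V, S.Nonempty → ∀ a, IsLUBWithin V S a → IsLUB (A '' S) (A a)

/-- `k : X → W` is a kernel of the operator `A` on `V ⊆ K(X)`: for every `f ∈ V` the set
`{f x • k x : x ∈ X}` is bounded above in `W` and `A f = ⊕_{x ∈ X} f x • k x`. -/
def IsKernelOf {K X : Type*} [IdemSemiring K] {W : Type*} [AddCommMonoid W]
    [PartialOrder W] [Module K W] (V : Set (X → K)) (A : (X → K) → W) (k : X → W) : Prop :=
  ∀ f ∈ V, BddAbove (Set.range fun x => f x • k x) ∧
    IsLUB (Set.range fun x => f x • k x) (A f)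

/-- `A` is an integral operator (has an integral representation): it has a kernel. -/
def IsIntegralOn {K X : Type*} [IdemSemiring K] {W : Type*} [AddCommMonoid W]
    [PartialOrder W] [Module K W] (V : Set (X → K)) (A : (X → K) → W) : Prop :=
  ∃ k : X → W, IsKernelOf V A k

/-- One-dimensional map from a functional semimodule `V ⊆ K(X)` to `W`. -/
def IsOneDimOn {K X : Type*} [IdemSemiring K] {W : Type*} [AddCommMonoid W]
    [PartialOrder W] [Module K W] (V : Set (X → K)) (g : (X → K) → W) : Prop :=
  ∃ (φ : (X → K) → K) (w : W), IsBLinearOn V φ ∧ ∀ f ∈ V, g f = φ f • w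

/-- b-nuclear map from a functional semimodule `V ⊆ K(X)` to `W`: the (pointwise on `V`)
supremum of a set of one-dimensional maps, bounded above at every `f ∈ V`. -/
def IsBNuclearOn {K X : Type*} [IdemSemiring K] {W : Type*} [AddCommMonoid W]
    [PartialOrder W] [Module K W] (V : Set (X → K)) (A : (X → K) → W) : Prop :=
  ∃ G : Set ((X → K) → W), (∀ g ∈ G, IsOneDimOn V g) ∧
    ∀ f ∈ V, BddAbove ((fun g => g f) '' G) ∧ IsLUB ((fun g => g f) '' G) (A f)

/-- One-dimensional operator from the functional semimodule `V ⊆ K(X)` to itself. -/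
def IsOneDimSelf {K X : Type*} [IdemSemiring K] (V : Set (X → K))
    (g : (X → K) → (X → K)) : Prop :=
  ∃ (φ : (X → K) → K) (w : X → K), IsBLinearOn V φ ∧ w ∈ V ∧ ∀ f ∈ V, g f = φ f • w

/-- b-nuclear operator from the functional semimodule `V ⊆ K(X)` to itself (the suprema
being taken inside `V`). -/
def IsBNuclearSelf {K X : Type*} [IdemSemiring K] (V : Set (X → K))
    (A : (X → K) → (X → K)) : Prop :=
  ∃ G : Set ((X → K) → (X → K)), (∀ g ∈ G, IsOneDimSelf V g) ∧
    ∀ f ∈ V, IsLUBWithin V ((fun g => g f) '' G) (A f)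

/-- Integral operator from the functional semimodule `V ⊆ K(X)` to itself: it has a
kernel `k : X → V`, the suprema being taken inside `V`. -/
def IsIntegralSelf {K X : Type*} [IdemSemiring K] (V : Set (X → K))
    (A : (X → K) → (X → K)) : Prop :=
  ∃ k : X → (X → K), (∀ x : X, k x ∈ V) ∧
    ∀ f ∈ V, IsLUBWithin V (Set.range fun x => f x • k x) (A f)

/-- The kernel theorem holds in `V ⊆ K(X)`: every b-linear map from `V` to an arbitrary
b-complete semimodule over `K` has an integral representation. -/
def KernelTheoremHolds {K X : Type*} [IdemSemiring K] (V : Set (X → K)) : Prop :=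
  ∀ (W : Type w) [AddCommMonoid W] [PartialOrder W] [Module K W],
    IsBCompleteSemimodule K W → ∀ A : (X → K) → W, IsBLinearOn V A → IsIntegralOn V A

/-- A b-linear operator between functional semimodules `V ⊆ K(X)` and `W ⊆ K(Y)`. -/
structure IsBLinearBetween (V : Set (X → K)) (W : Set (Y → K))
    (A : (X → K) → (Y → K)) : Prop where
  maps_to : ∀ f ∈ V, A f ∈ W
  map_smul : ∀ (c : K), ∀ f ∈ V, A (c • f) = c • A f
  map_lub : ∀ S ⊆ V, S.Nonempty → ∀ a, IsLUBWithin V S a → IsLUBWithin W (A '' S) (A a)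

/-- δ-functionals on a functional semimodule `V ⊆ K(X)`. -/
def IsDeltaOn {K X : Type*} [IdemSemiring K] (V : Set (X → K)) (φ : (X → K) → K) : Prop :=
  IsBLinearOn V φ ∧ ∃ v ∈ V, ∀ w ∈ V, φ w • v ≤ w

/-- The set `Δ(V)` of δ-functionals on the functional semimodule `V ⊆ K(X)`, as a type. -/
def DeltaOn {K X : Type*} [IdemSemiring K] (V : Set (X → K)) : Type _ :=
  {φ : (X → K) → K // IsDeltaOn V φ}

/-- The natural map `i_Δ : V → K(Δ(V))` for a functional semimodule `V ⊆ K(X)`. -/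
def iDeltaOn {K X : Type*} [IdemSemiring K] (V : Set (X → K)) :
    (X → K) → (DeltaOn V → K) :=
  fun f φ => φ.1 f

end Defs

/-
If the identity is nuclear, then every v is the supremum of the vectors φ(v) • w over the pairs
(φ, w) with φ(u) • w ≤ u for all u. A kernel needs a single vector for each φ, and the vectors
admissible for one φ may be unbounded. Finitely many of them always have an admissible upper bound,
though, so it suffices to find a set of pairs, finite over each functional, that meets every bad
set {(φ, w) | ¬ φ(v) • w ≤ b} with ¬ v ≤ b.

Each functional is the supremum of its components along a family of pairs; fix a family of minimal
cardinality, the support of the functional. By distributivity a bad set containing (χ, w) contains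
a pair (φ, u) of the support of χ together with all the pairs (ψ, w), where ψ is the sum of the
component of χ along (φ, u) and another component of χ. By minimality of the support there are as
many such ψ as the support has elements, provided it is infinite. The transversal is then found by
induction on the cardinality of the set of pairs: pairs with a large support leave enough room to
choose representatives over distinct functionals, and the bad sets without such pairs can be shrunk
to sets of constant rank, which live in disjoint smaller pieces.
-/

section CardinalBounds

open Cardinal

theorem exists_injective_mem_of_mk_lt {T Φ : Type w} {α : Type*} [LinearOrder α]
    [WellFoundedLT α] (key : T → α) (hkey : Function.Injective key) (choices : T → Set Φ)
    (h : ∀ t, #{t' | key t' < key t} < #(choices t)) :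
    ∃ c : T → Φ, Function.Injective c ∧ ∀ t, c t ∈ choices t := by
  have fresh (t : T) (earlier : ∀ t', key t' < key t → Φ) :
      ∃ x ∈ choices t, ∀ t' ht', earlier t' ht' ≠ x := by
    have hcard : #(range fun p : {t' | key t' < key t} => earlier p.1 p.2) < #(choices t) :=
      mk_range_le.trans_lt (h t)
    obtain ⟨x, hx, hxr⟩ := not_subset.1 fun hsub => (mk_le_mk_of_subset hsub).not_gt hcard
    exact ⟨x, hx, fun t' ht' e => hxr ⟨⟨t', ht'⟩, e⟩⟩
  choose pick pick_mem pick_ne using fresh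
  have wf : WellFounded fun t' t : T => key t' < key t := InvImage.wf key wellFounded_lt
  let c : T → Φ := wf.fix pick
  have hc (t : T) : c t = pick t fun t' _ => c t' := wf.fix_eq pick t
  have c_ne {t' t : T} (hlt : key t' < key t) : c t' ≠ c t := by
    rw [hc t]
    exact pick_ne t (fun t' _ => c t') t' hlt
  refine ⟨c, fun t t' e => hkey ?_, fun t => hc t ▸ pick_mem t _⟩
  by_contra hne
  rcases lt_or_gt_of_ne hne with hlt | hlt
  · exact c_ne hlt e
  · exact c_ne hlt e.symm

theorem exists_injOn_ordinal_lt_ord {S : Type w} (X : Set S) :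
    ∃ f : S → Ordinal.{w}, InjOn f X ∧ ∀ x ∈ X, f x < (#X).ord := by
  classical
  obtain ⟨r, hr, hord⟩ := exists_ord_eq X
  refine ⟨fun s => if h : s ∈ X then Ordinal.typein r ⟨s, h⟩ else 0, ?_, ?_⟩
  · intro a ha b hb hab
    simp only [ha, hb, dif_pos] at hab
    exact congrArg Subtype.val (Ordinal.typein_injective r hab)
  · intro x hx
    simp only [hx, dif_pos, hord]
    exact Ordinal.typein_lt_type r _

theorem exists_injective_mem_of_mk_le_lt {T Φ : Type w} (γ : T → Ordinal.{w})
    (choices : T → Set Φ) (h : ∀ t, #{t' | γ t' ≤ γ t} < #(choices t)) :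
    ∃ c : T → Φ, Function.Injective c ∧ ∀ t, c t ∈ choices t := by
  obtain ⟨f, hf, -⟩ := exists_injOn_ordinal_lt_ord (univ : Set T)
  refine exists_injective_mem_of_mk_lt (fun t => toLex (γ t, f t)) (fun t t' e => ?_) choices
    fun t => (mk_le_mk_of_subset fun t' ht' => ?_).trans_lt (h t)
  · exact hf (mem_univ t) (mem_univ t') (congrArg (fun p => (ofLex p).2) e)
  · rcases Prod.Lex.toLex_lt_toLex.1 ht' with hlt | ⟨heq, -⟩
    · exact hlt.le
    · exact heq.le

theorem mk_le_max_card_of_injOn {S : Type w} {X : Set S} {f : S → Ordinal.{w}}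
    (hf : InjOn f X) {α : Ordinal.{w}} (hα : ∀ x ∈ X, f x ≤ α) : #X ≤ max α.card ℵ₀ := by
  have himage : f '' X ⊆ Iio (α + 1) :=
    image_subset_iff.2 fun x hx => Order.lt_add_one_iff.2 (hα x hx)
  have hcard : lift.{w + 1} #X ≤ lift.{w + 1} (α + 1).card := by
    rw [← mk_image_eq_of_injOn_lift f X hf, lift_id'.{w, w + 1}, ← mk_Iio_ordinal]
    exact mk_le_mk_of_subset himage
  calc #X ≤ (α + 1).card := lift_le.1 hcard
    _ = α.card + 1 := Ordinal.card_add_one α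
    _ ≤ max α.card ℵ₀ := add_le_of_le (le_max_right _ _) (le_max_left _ _)
        (one_le_aleph0.trans (le_max_right _ _))

theorem mk_biUnion_le_of_le_of_le {S T : Type w} {X : Set S} {A : S → Set T} {c : Cardinal.{w}}
    (hc : ℵ₀ ≤ c) (hX : #X ≤ c) (hA : ∀ x ∈ X, #(A x) ≤ c) : #(⋃ x ∈ X, A x : Set T) ≤ c :=
  calc #(⋃ x ∈ X, A x : Set T) ≤ #X * ⨆ x : X, #(A x) := mk_biUnion_le A X
    _ ≤ c * c := mul_le_mul' hX (ciSup_le' fun x => hA x x.2)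
    _ = c := mul_eq_self hc

theorem mk_reflTransGen_le {S : Type w} {X : Set S} {r : S → S → Prop} {c : Cardinal.{w}}
    (hc : ℵ₀ ≤ c) (hX : #X ≤ c) (hr : ∀ x, #{y | r x y} ≤ c) :
    #{y | ∃ x ∈ X, Relation.ReflTransGen r x y} ≤ c := by
  let layer (n : ℕ) : Set S := (fun Z => ⋃ x ∈ Z, {y | r x y})^[n] X
  have layer_succ (n : ℕ) : layer (n + 1) = ⋃ x ∈ layer n, {y | r x y} :=
    Function.iterate_succ_apply' _ _ _
  have mk_layer_le (n : ℕ) : #(layer n) ≤ c := by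
    induction n with
    | zero => exact hX
    | succ n ih =>
      rw [layer_succ]
      exact mk_biUnion_le_of_le_of_le hc ih fun x _ => hr x
  have hsub : {y | ∃ x ∈ X, Relation.ReflTransGen r x y} ⊆ ⋃ n, layer n := by
    rintro y ⟨x, hx, hxy⟩
    induction hxy with
    | refl => exact mem_iUnion.2 ⟨0, hx⟩
    | @tail y z _ hyz ih =>
      obtain ⟨n, hn⟩ := mem_iUnion.1 ih
      exact mem_iUnion.2 ⟨n + 1, layer_succ n ▸ mem_biUnion hn hyz⟩
  calc #{y | ∃ x ∈ X, Relation.ReflTransGen r x y} ≤ #(⋃ n, layer n) := mk_le_mk_of_subset hsub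
    _ ≤ ℵ₀ * ⨆ n, #(layer n) := by simpa using mk_iUnion_le_lift layer
    _ ≤ c * c := mul_le_mul' hc (ciSup_le' mk_layer_le)
    _ = c := mul_eq_self hc

-- The points of rank at most `α` are those reachable from the first `α` points of `B` through
-- points with at most `max α.card ℵ₀` successors.
theorem exists_rank_le_of_mem_succ {S : Type w} (B : Set S) (succ : S → Set S) :
    ∃ rank : S → Ordinal.{w}, (∀ α, #{m ∈ B | rank m ≤ α} ≤ max α.card ℵ₀) ∧
      (∀ m ∈ B, (rank m).card < #B) ∧
      ∀ m ∈ B, #(succ m) ≤ max (rank m).card ℵ₀ → ∀ x ∈ succ m, rank x ≤ rank m := by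
  obtain ⟨index, index_injOn, index_lt⟩ := exists_injOn_ordinal_lt_ord B
  let step (α : Ordinal.{w}) (m x : S) : Prop := #(succ m) ≤ max α.card ℵ₀ ∧ x ∈ succ m
  let reach (α : Ordinal.{w}) : Set S :=
    {y | ∃ x ∈ {m ∈ B | index m ≤ α}, Relation.ReflTransGen (step α) x y}
  have reach_mono {α β : Ordinal.{w}} (hαβ : α ≤ β) : reach α ⊆ reach β := by
    rintro y ⟨x, ⟨hxB, hx⟩, hxy⟩
    have hcard : max α.card ℵ₀ ≤ max β.card ℵ₀ := max_le_max_right _ (Ordinal.card_le_card hαβ)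
    exact ⟨x, ⟨hxB, hx.trans hαβ⟩,
      Relation.ReflTransGen.mono (fun m z hz => ⟨hz.1.trans hcard, hz.2⟩) _ _ hxy⟩
  have mk_reach_le (α : Ordinal.{w}) : #(reach α) ≤ max α.card ℵ₀ := by
    refine mk_reflTransGen_le (le_max_right _ _)
      (mk_le_max_card_of_injOn (index_injOn.mono (sep_subset _ _)) fun m hm => hm.2) fun m => ?_
    by_cases hm : #(succ m) ≤ max α.card ℵ₀
    · exact (mk_le_mk_of_subset fun x hx => hx.2).trans hm
    · exact (mk_le_mk_of_subset (t := ∅) fun x hx => hm hx.1).trans (by simp)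
  have mem_reach_index {m : S} (hm : m ∈ B) : m ∈ reach (index m) := ⟨m, ⟨hm, le_rfl⟩, .refl⟩
  let rank (m : S) : Ordinal.{w} := sInf {α | m ∈ reach α}
  have rank_le {m : S} {α : Ordinal.{w}} (hm : m ∈ reach α) : rank m ≤ α := csInf_le' hm
  have mem_reach_rank {m : S} (hm : m ∈ B) : m ∈ reach (rank m) :=
    csInf_mem (s := {α | m ∈ reach α}) ⟨_, mem_reach_index hm⟩
  refine ⟨rank, fun α => ?_, fun m hm => ?_, fun m hm hsucc x hx => ?_⟩
  · exact (mk_le_mk_of_subset fun m hm => reach_mono hm.2 (mem_reach_rank hm.1)).trans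
      (mk_reach_le α)
  · exact lt_ord.1 ((rank_le (mem_reach_index hm)).trans_lt (index_lt m hm))
  · obtain ⟨y, hy, hym⟩ := mem_reach_rank hm
    exact rank_le ⟨y, hy, hym.tail ⟨hsucc, hx⟩⟩

end CardinalBounds

section FiniteTransversal

open Cardinal

variable {S Φ : Type w} {lead : S → Φ} {𝒜 ℬ : Set (Set S)}

/-- The members of the family `𝒜` can all be met by one set that is finite over each point of
`Φ`. This is how boundedness is secured in the search for a kernel: finitely many vectors
admissible for the same functional always have an admissible upper bound. -/
def HasFiniteTransversal (lead : S → Φ) (𝒜 : Set (Set S)) : Prop :=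
  ∃ D : Set S, (∀ φ, {m ∈ D | lead m = φ}.Finite) ∧ ∀ A ∈ 𝒜, (A ∩ D).Nonempty

namespace HasFiniteTransversal

theorem of_exists_subset (h : HasFiniteTransversal lead ℬ) (hsub : ∀ A ∈ 𝒜, ∃ A' ∈ ℬ, A' ⊆ A) :
    HasFiniteTransversal lead 𝒜 := by
  obtain ⟨D, hfin, hmeet⟩ := h
  refine ⟨D, hfin, fun A hA => ?_⟩
  obtain ⟨A', hA', hle⟩ := hsub A hA
  exact (hmeet A' hA').mono (inter_subset_inter_left D hle)

theorem union (h𝒜 : HasFiniteTransversal lead 𝒜) (hℬ : HasFiniteTransversal lead ℬ) :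
    HasFiniteTransversal lead (𝒜 ∪ ℬ) := by
  obtain ⟨D, hDfin, hD⟩ := h𝒜
  obtain ⟨E, hEfin, hE⟩ := hℬ
  refine ⟨D ∪ E, fun φ => ?_, ?_⟩
  · exact ((hDfin φ).union (hEfin φ)).subset fun m hm => hm.1.imp (⟨·, hm.2⟩) (⟨·, hm.2⟩)
  · rintro A (hA | hA)
    · exact (hD A hA).mono (inter_subset_inter_right A subset_union_left)
    · exact (hE A hA).mono (inter_subset_inter_right A subset_union_right)

theorem iUnion_of_lead_disjoint {ι : Type*} {B : ι → Set S}
    (hB : ∀ i j, ∀ m ∈ B i, ∀ m' ∈ B j, lead m = lead m' → i = j) {𝒞 : ι → Set (Set S)}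
    (hsub : ∀ i, ∀ A ∈ 𝒞 i, A ⊆ B i) (h : ∀ i, HasFiniteTransversal lead (𝒞 i)) :
    HasFiniteTransversal lead (⋃ i, 𝒞 i) := by
  choose D hfin hmeet using h
  refine ⟨⋃ i, D i ∩ B i, fun φ => ?_, fun A hA => ?_⟩
  · rcases eq_empty_or_nonempty {m ∈ ⋃ i, D i ∩ B i | lead m = φ} with hempty | ⟨m, hm, hmφ⟩
    · exact hempty ▸ finite_empty
    obtain ⟨i, -, hmi⟩ := mem_iUnion.1 hm
    refine (hfin i φ).subset fun m' hm' => ⟨?_, hm'.2⟩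
    obtain ⟨j, hm'D, hm'j⟩ := mem_iUnion.1 hm'.1
    exact hB j i m' hm'j m hmi (hm'.2.trans hmφ.symm) ▸ hm'D
  · obtain ⟨i, hi⟩ := mem_iUnion.1 hA
    obtain ⟨m, hmA, hmD⟩ := hmeet i A hi
    exact ⟨m, hmA, mem_iUnion.2 ⟨i, hmD, hsub i A hi hmA⟩⟩

theorem range_of_mk_lt {T : Type w} (targets : T → Set S) (γ : T → Ordinal.{w})
    (hγ : ∀ t, #{t' | γ t' ≤ γ t} < #(lead '' targets t)) :
    HasFiniteTransversal lead (range targets) := by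
  obtain ⟨c, hc, hmem⟩ := exists_injective_mem_of_mk_le_lt γ (fun t => lead '' targets t) hγ
  choose d hd hlead using hmem
  refine ⟨range d, fun φ => Set.Subsingleton.finite ?_, ?_⟩
  · rintro _ ⟨⟨t, rfl⟩, ht⟩ _ ⟨⟨t', rfl⟩, ht'⟩
    rw [hc ((hlead t).symm.trans (ht.trans (ht'.symm.trans (hlead t'))))]
  · rintro _ ⟨t, rfl⟩
    exact ⟨d t, hd t, mem_range_self t⟩

end HasFiniteTransversal

end FiniteTransversal

section RefinementSystem

open Cardinal

/-- The combinatorial skeleton of the transversal argument. A point `m : S` (later: a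
δ-functional together with an admissible vector) lies over its functional `lead m`, the elements
of `support φ` are the points that `φ` decomposes into, and `variants m m'` is the family of
points obtained from `m` by replacing its functional, one variant for each way of combining `m'`
with an element of the support. The two inequalities say that over an infinite support the
variants have as many different leads as the support has elements. -/
structure RefinementSystem (S Φ : Type w) where
  lead : S → Φ
  support : Φ → Set S
  variants : S → S → Set S
  mk_variants_le : ∀ m, ∀ m' ∈ support (lead m), #(variants m m') ≤ #(support (lead m))
  mk_support_le : ∀ m, (support (lead m)).Infinite → ∀ m' ∈ support (lead m),
    #(support (lead m)) ≤ #(lead '' variants m m')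

namespace RefinementSystem

variable {S Φ : Type w} (R : RefinementSystem S Φ)

/-- `A` is viable if each of its points `m` has a support element `m' ∈ A` all of whose
combinations stay in `A`. The points witnessing that a given inequality `v ≤ b` fails form a
viable set, and a kernel has to meet each of these sets. -/
def IsViable (A : Set S) : Prop :=
  ∀ m ∈ A, ∃ m' ∈ R.support (R.lead m), m' ∈ A ∧ R.variants m m' ⊆ A

/-- The nonempty viable subsets of `B`. -/
def viableSubsets (B : Set S) : Set (Set S) :=
  {A | A ⊆ B ∧ A.Nonempty ∧ R.IsViable A}

/-- All points to which viability may lead from `m`. -/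
def successors (m : S) : Set S :=
  R.support (R.lead m) ∪ ⋃ m' ∈ R.support (R.lead m), R.variants m m'

/-- `m` is rich with respect to `rank` if its support is infinite and larger than the set of
ordinals below its rank. -/
def IsRich (rank : S → Ordinal.{w}) (m : S) : Prop :=
  max (rank m).card ℵ₀ < #(R.support (R.lead m))

/-- The points of `B` that are not rich, have rank `r`, and have minimal rank among the points of
`B` over the same lead that are not rich. -/
def level (B : Set S) (rank : S → Ordinal.{w}) (r : Ordinal.{w}) : Set S :=
  {m ∈ B | ¬ R.IsRich rank m ∧ rank m = r ∧
    ∀ m' ∈ B, R.lead m' = R.lead m → ¬ R.IsRich rank m' → r ≤ rank m'}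

variable {R} {B : Set S} {rank : S → Ordinal.{w}}

theorem mk_successors_le {m : S} {c : Cardinal.{w}} (hc : ℵ₀ ≤ c)
    (hm : #(R.support (R.lead m)) ≤ c) : #(R.successors m) ≤ c :=
  (mk_union_le _ _).trans <| add_le_of_le hc hm <|
    mk_biUnion_le_of_le_of_le hc hm fun m' hm' => (R.mk_variants_le m m' hm').trans hm

theorem IsRich.infinite_support {m : S} (hm : R.IsRich rank m) :
    (R.support (R.lead m)).Infinite :=
  infinite_coe_iff.1 (infinite_iff.2 ((le_max_right _ _).trans hm.le))

theorem hasFiniteTransversal_of_infinite_support (hB : B.Countable) :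
    HasFiniteTransversal R.lead
      {A ∈ R.viableSubsets B | ∃ m ∈ A, (R.support (R.lead m)).Infinite} := by
  let tasks : Set (S × S) := {t | t ∈ B ×ˢ B ∧ (R.support (R.lead t.1)).Infinite ∧
    t.2 ∈ R.support (R.lead t.1)}
  have tasks_countable : tasks.Countable := (hB.prod hB).mono fun t ht => ht.1
  have := tasks_countable.to_subtype
  obtain ⟨e, he⟩ := exists_injective_nat tasks
  refine (HasFiniteTransversal.range_of_mk_lt (fun t : tasks => R.variants t.1.1 t.1.2)
    (fun t => (e t : Ordinal.{w})) fun t => ?_).of_exists_subset ?_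
  · obtain ⟨-, hinf, hmem⟩ := t.2
    have hfin : {t' : tasks | (e t' : Ordinal.{w}) ≤ e t}.Finite :=
      ((finite_Iic (e t)).preimage he.injOn).subset fun t' ht' => by simpa using ht'
    calc #{t' : tasks | (e t' : Ordinal.{w}) ≤ e t} < ℵ₀ := lt_aleph0_iff_set_finite.2 hfin
      _ ≤ #(R.support (R.lead t.1.1)) := infinite_iff.1 hinf.to_subtype
      _ ≤ #(R.lead '' R.variants t.1.1 t.1.2) := R.mk_support_le _ hinf _ hmem
  · rintro A ⟨⟨hAB, -, hviable⟩, m, hm, hinf⟩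
    obtain ⟨m', hsupport, hm', hvariants⟩ := hviable m hm
    exact ⟨_, ⟨⟨(m, m'), ⟨hAB hm, hAB hm'⟩, hinf, hsupport⟩, rfl⟩, hvariants⟩

theorem hasFiniteTransversal_of_finite_support (hB : B.Countable) :
    HasFiniteTransversal R.lead
      {A ∈ R.viableSubsets B | ∀ m ∈ A, (R.support (R.lead m)).Finite} := by
  obtain ⟨N, hN⟩ := countable_iff_exists_injOn.1 (hB.image R.lead)
  let smaller (φ : Φ) : Set Φ :=
    {χ ∈ R.lead '' B | (R.support χ).Finite ∧ N χ ≤ N φ}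
  have smaller_finite (φ : Φ) : (smaller φ).Finite :=
    .of_finite_image ((finite_Iic (N φ)).subset (image_subset_iff.2 fun χ hχ => hχ.2.2))
      (hN.mono fun χ hχ => hχ.1)
  refine ⟨{m | ∃ χ ∈ smaller (R.lead m), m ∈ R.support χ}, fun φ => ?_, ?_⟩
  · refine ((smaller_finite φ).biUnion fun χ hχ => hχ.2.1).subset ?_
    rintro m ⟨⟨χ, hχ, hm⟩, rfl⟩
    exact mem_biUnion hχ hm
  · rintro A ⟨⟨hAB, hne, hviable⟩, hfin⟩
    obtain ⟨m, hmin⟩ := exists_minimalFor_of_wellFoundedLT (· ∈ A) (N ∘ R.lead) hne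
    obtain ⟨m', hsupport, hm', -⟩ := hviable m hmin.1
    exact ⟨m', hm', R.lead m,
      ⟨mem_image_of_mem _ (hAB hmin.1), hfin m hmin.1, hmin.le hm'⟩, hsupport⟩

theorem hasFiniteTransversal_of_countable (hB : B.Countable) :
    HasFiniteTransversal R.lead (R.viableSubsets B) := by
  refine ((hasFiniteTransversal_of_infinite_support hB).union
    (hasFiniteTransversal_of_finite_support hB)).of_exists_subset fun A hA => ⟨A, ?_, subset_rfl⟩
  by_cases hinf : ∃ m ∈ A, (R.support (R.lead m)).Infinite
  · exact .inl ⟨hA, hinf⟩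
  · exact .inr ⟨hA, by simpa using hinf⟩

theorem hasFiniteTransversal_of_isRich (hcount : ∀ α, #{m ∈ B | rank m ≤ α} ≤ max α.card ℵ₀) :
    HasFiniteTransversal R.lead {A ∈ R.viableSubsets B | ∃ m ∈ A, R.IsRich rank m} := by
  choose index index_injOn index_lt using fun χ => exists_injOn_ordinal_lt_ord (R.support χ)
  let tasks : Set (S × S) :=
    {t | t.1 ∈ B ∧ R.IsRich rank t.1 ∧ t.2 ∈ R.support (R.lead t.1)}
  let γ (t : S × S) : Ordinal.{w} := max (rank t.1) (index (R.lead t.1) t.2)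
  have mk_tasks_le (α : Ordinal.{w}) : #{t : tasks | γ t.1 ≤ α} ≤ max α.card ℵ₀ := by
    have hsub : Subtype.val '' {t : tasks | γ t.1 ≤ α} ⊆ ⋃ m ∈ {m ∈ B | rank m ≤ α},
        Prod.mk m '' {m' ∈ R.support (R.lead m) | index (R.lead m) m' ≤ α} := by
      rintro _ ⟨⟨⟨m, m'⟩, hmB, _, hm'⟩, hle, rfl⟩
      exact mem_biUnion ⟨hmB, (le_max_left _ _).trans hle⟩
        ⟨m', ⟨hm', (le_max_right _ _).trans hle⟩, rfl⟩
    rw [← mk_image_eq Subtype.val_injective]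
    refine (mk_le_mk_of_subset hsub).trans <|
      mk_biUnion_le_of_le_of_le (le_max_right _ _) (hcount α) fun m _ => mk_image_le.trans ?_
    exact mk_le_max_card_of_injOn ((index_injOn _).mono (sep_subset _ _)) fun m' hm' => hm'.2
  refine (HasFiniteTransversal.range_of_mk_lt (fun t : tasks => R.variants t.1.1 t.1.2)
    (fun t => γ t.1) fun t => ?_).of_exists_subset ?_
  · obtain ⟨⟨m, m'⟩, -, hrich, hm'⟩ := t
    have hγ : (γ (m, m')).card < #(R.support (R.lead m)) := lt_ord.1 <|
      max_lt (lt_ord.2 ((le_max_left _ _).trans_lt hrich)) (index_lt _ _ hm')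
    calc _ ≤ max (γ (m, m')).card ℵ₀ := mk_tasks_le _
      _ < #(R.support (R.lead m)) := max_lt hγ ((le_max_right _ _).trans_lt hrich)
      _ ≤ #(R.lead '' R.variants m m') := R.mk_support_le _ hrich.infinite_support _ hm'
  · rintro A ⟨⟨hAB, -, hviable⟩, m, hm, hrich⟩
    obtain ⟨m', hsupport, -, hvariants⟩ := hviable m hm
    exact ⟨_, ⟨⟨(m, m'), hAB hm, hrich, hsupport⟩, rfl⟩, hvariants⟩

theorem exists_subset_mem_viableSubsets_level
    (hsucc : ∀ m ∈ B, ¬ R.IsRich rank m → ∀ x ∈ R.successors m, rank x ≤ rank m)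
    {A : Set S} (hA : A ∈ R.viableSubsets B) (hpoor : ∀ m ∈ A, ¬ R.IsRich rank m) :
    ∃ r, ∃ A' ∈ R.viableSubsets (R.level B rank r), A' ⊆ A := by
  obtain ⟨hAB, hne, hviable⟩ := hA
  obtain ⟨m₀, hmin⟩ := exists_minimalFor_of_wellFoundedLT (· ∈ A) rank hne
  refine ⟨rank m₀, {m ∈ A | rank m = rank m₀}, ⟨?_, ⟨m₀, hmin.1, rfl⟩, ?_⟩, sep_subset _ _⟩
  · rintro m ⟨hm, hrank⟩
    refine ⟨hAB hm, hpoor m hm, hrank, fun m₁ hm₁ hlead hpoor₁ => ?_⟩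
    obtain ⟨m', hsupport, hm', -⟩ := hviable m hm
    exact (hmin.le hm').trans (hsucc m₁ hm₁ hpoor₁ m' (.inl (hlead ▸ hsupport)))
  · rintro m ⟨hm, hrank⟩
    obtain ⟨m', hsupport, hm', hvariants⟩ := hviable m hm
    have rank_eq {x : S} (hx : x ∈ A) (hxm : x ∈ R.successors m) : rank x = rank m₀ :=
      ((hsucc m (hAB hm) (hpoor m hm) x hxm).trans hrank.le).antisymm (hmin.le hx)
    exact ⟨m', hsupport, ⟨hm', rank_eq hm' (.inl hsupport)⟩, fun x hx =>
      ⟨hvariants hx, rank_eq (hvariants hx) (.inr (mem_biUnion hsupport hx))⟩⟩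

theorem hasFiniteTransversal_of_not_isRich
    (hsucc : ∀ m ∈ B, ¬ R.IsRich rank m → ∀ x ∈ R.successors m, rank x ≤ rank m)
    (hlevel : ∀ r, HasFiniteTransversal R.lead (R.viableSubsets (R.level B rank r))) :
    HasFiniteTransversal R.lead {A ∈ R.viableSubsets B | ∀ m ∈ A, ¬ R.IsRich rank m} := by
  refine (HasFiniteTransversal.iUnion_of_lead_disjoint (B := R.level B rank) ?_
    (fun r A hA => hA.1) hlevel).of_exists_subset fun A hA => ?_
  · rintro r s m ⟨hm, hpoor, rfl, hmin⟩ m' ⟨hm', hpoor', rfl, hmin'⟩ hlead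
    exact (hmin m' hm' hlead.symm hpoor').antisymm (hmin' m hm hlead hpoor)
  · obtain ⟨r, A', hA', hsub⟩ := exists_subset_mem_viableSubsets_level hsucc hA.1 hA.2
    exact ⟨A', mem_iUnion.2 ⟨r, hA'⟩, hsub⟩

theorem mk_level_lt (hB : ℵ₀ < #B) (hcount : ∀ α, #{m ∈ B | rank m ≤ α} ≤ max α.card ℵ₀)
    (hcard : ∀ m ∈ B, (rank m).card < #B) (r : Ordinal.{w}) : #(R.level B rank r) < #B := by
  rcases eq_empty_or_nonempty (R.level B rank r) with hempty | ⟨m, hm, -, rfl, -⟩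
  · simpa [hempty] using aleph0_pos.trans hB
  · calc #(R.level B rank (rank m)) ≤ #{x ∈ B | rank x ≤ rank m} :=
          mk_le_mk_of_subset fun x hx => ⟨hx.1, hx.2.2.1.le⟩
      _ ≤ max (rank m).card ℵ₀ := hcount _
      _ < #B := max_lt (hcard m hm) hB

theorem hasFiniteTransversal_of_aleph0_lt (hB : ℵ₀ < #B)
    (ih : ∀ B' : Set S, #B' < #B → HasFiniteTransversal R.lead (R.viableSubsets B')) :
    HasFiniteTransversal R.lead (R.viableSubsets B) := by
  obtain ⟨rank, hcount, hcard, hsucc⟩ := exists_rank_le_of_mem_succ B R.successors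
  have hsucc_poor (m : S) (hm : m ∈ B) (hpoor : ¬ R.IsRich rank m) :
      ∀ x ∈ R.successors m, rank x ≤ rank m :=
    hsucc m hm (mk_successors_le (le_max_right _ _) (not_lt.1 hpoor))
  refine ((hasFiniteTransversal_of_isRich hcount).union
    (hasFiniteTransversal_of_not_isRich hsucc_poor fun r =>
      ih _ (mk_level_lt hB hcount hcard r))).of_exists_subset fun A hA => ⟨A, ?_, subset_rfl⟩
  by_cases hrich : ∃ m ∈ A, R.IsRich rank m
  · exact .inl ⟨hA, hrich⟩
  · exact .inr ⟨hA, by simpa using hrich⟩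

variable (R) in
theorem hasFiniteTransversal_viableSubsets (B : Set S) :
    HasFiniteTransversal R.lead (R.viableSubsets B) := by
  induction hc : #B using WellFoundedLT.induction generalizing B with
  | ind c ih =>
    subst hc
    rcases le_or_gt #B ℵ₀ with hB | hB
    · exact hasFiniteTransversal_of_countable (le_aleph0_iff_set_countable.1 hB)
    · exact hasFiniteTransversal_of_aleph0_lt hB fun B' hB' => ih _ hB' B' rfl

end RefinementSystem

end RefinementSystem

section Semimodule

variable {K : Type u} [IdemSemiring K]
  {V : Type v} [AddCommMonoid V] [PartialOrder V] [Module K V]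
  {W : Type w} [AddCommMonoid W] [PartialOrder W] [Module K W]

/-- The partial order of the additive monoid `V` is the canonical order of an idempotent monoid. -/
def IsCanonicalOrder (V : Type*) [AddCommMonoid V] [PartialOrder V] : Prop :=
  ∀ x y : V, x ≤ y ↔ x + y = y

/-- Right multiplication by each element of `K` preserves suprema of nonempty sets. -/
def IsMulRightLUBPreserving (K : Type*) [Mul K] [Preorder K] : Prop :=
  ∀ (c : K) (s : Set K) (a : K), s.Nonempty → IsLUB s a → IsLUB ((fun x => x * c) '' s) (a * c)

/-- For each `w : V` the map `c ↦ c • w` preserves suprema of nonempty subsets of `K`. -/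
def IsSMulLUBPreserving (K V : Type*) [Preorder K] [Preorder V] [SMul K V] : Prop :=
  ∀ (w : V) (s : Set K) (a : K), s.Nonempty → IsLUB s a → IsLUB ((fun c => c • w) '' s) (a • w)

theorem isCanonicalOrder_idemSemiring : IsCanonicalOrder K :=
  fun _ _ => add_eq_right_iff_le.symm

namespace IsCanonicalOrder

theorem zero_le (hV : IsCanonicalOrder V) (x : V) : 0 ≤ x :=
  (hV 0 x).2 (zero_add x)

theorem le_add_right (hV : IsCanonicalOrder V) (x y : V) : x ≤ x + y := by
  rw [hV, ← add_assoc, (hV x x).1 le_rfl]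

theorem le_add_left (hV : IsCanonicalOrder V) (x y : V) : x ≤ y + x :=
  add_comm x y ▸ hV.le_add_right x y

theorem add_le (hV : IsCanonicalOrder V) {x y z : V} (hx : x ≤ z) (hy : y ≤ z) :
    x + y ≤ z := by
  rw [hV] at hx hy ⊢
  rw [add_assoc, hy, hx]

theorem smul_le_smul_left (hV : IsCanonicalOrder V) (c : K) {x y : V} (h : x ≤ y) :
    c • x ≤ c • y := by
  rw [hV] at h ⊢
  rw [← smul_add, h]

theorem smul_le_smul_right (hV : IsCanonicalOrder V) {a b : K} (h : a ≤ b) (x : V) :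
    a • x ≤ b • x := by
  rw [hV, ← add_smul, add_eq_right_iff_le.2 h]

end IsCanonicalOrder

namespace IsBLinearMap

theorem monotone {A : V → W} (hA : IsBLinearMap K A) : Monotone A := by
  intro x y hxy
  have hlub : IsLUB {x, y} y := 
    ⟨by rintro z (rfl | rfl); exacts [hxy, le_rfl], fun c hc => hc (mem_insert_of_mem x rfl)⟩
  exact (hA.map_lub {x, y} (insert_nonempty _ _) hlub.bddAbove y hlub).1
    (mem_image_of_mem A (mem_insert x {y}))

theorem zero : IsBLinearMap K (0 : V → W) where
  map_smul c _ := (smul_zero c).symm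
  map_lub s hs _ a _ := by simp [hs.image_const]

theorem add (hW : IsCanonicalOrder W) {A B : V → W} (hA : IsBLinearMap K A)
    (hB : IsBLinearMap K B) : IsBLinearMap K (A + B) where
  map_smul c v := by simp only [Pi.add_apply, hA.map_smul, hB.map_smul, smul_add]
  map_lub s hs hbdd a ha := by
    refine ⟨forall_mem_image.2 fun x hx => ?_, fun b hb => hW.add_le ?_ ?_⟩
    · exact hW.add_le ((hA.monotone (ha.1 hx)).trans (hW.le_add_right _ _))
        ((hB.monotone (ha.1 hx)).trans (hW.le_add_left _ _))
    · exact (hA.map_lub s hs hbdd a ha).2 <| forall_mem_image.2 fun x hx =>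
        (hW.le_add_right _ _).trans (hb (mem_image_of_mem _ hx))
    · exact (hB.map_lub s hs hbdd a ha).2 <| forall_mem_image.2 fun x hx =>
        (hW.le_add_left _ _).trans (hb (mem_image_of_mem _ hx))

theorem mul_const (hmul : IsMulRightLUBPreserving K) {φ : V → K} (hφ : IsBLinearMap K φ) (c : K) :
    IsBLinearMap K (fun v => φ v * c) where
  map_smul k v := by simp only [hφ.map_smul, smul_eq_mul, mul_assoc]
  map_lub s hs hbdd a ha := by
    simpa only [image_image] using hmul c _ _ (hs.image φ) (hφ.map_lub s hs hbdd a ha)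

end IsBLinearMap

theorem exists_admissible_upperBound (hV : IsCanonicalOrder V) (φ : V → K) {F : Set V}
    (hF : F.Finite) (h : ∀ w ∈ F, ∀ u, φ u • w ≤ u) :
    ∃ w, (∀ u, φ u • w ≤ u) ∧ w ∈ upperBounds F := by
  induction F, hF using Set.Finite.induction_on with
  | empty => exact ⟨0, fun u => (smul_zero (φ u)).trans_le (hV.zero_le u), by simp⟩
  | @insert x F _ _ ih =>
    obtain ⟨w, hw, hwF⟩ := ih fun y hy => h y (mem_insert_of_mem x hy)
    refine ⟨x + w, fun u => ?_, ?_⟩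
    · rw [smul_add]
      exact hV.add_le (h x (mem_insert x F) u) (hw u)
    · rintro y (rfl | hy)
      · exact hV.le_add_right _ _
      · exact (hwF hy).trans (hV.le_add_left _ _)

end Semimodule

section DeltaPair

open Cardinal

/-- A b-linear functional together with a vector witnessing that it is a δ-functional. -/
structure DeltaPair (K V : Type*) [IdemSemiring K] [AddCommMonoid V] [PartialOrder V]
    [Module K V] where
  functional : V → K
  isBLinearMap : IsBLinearMap K functional
  vector : V
  smul_le : ∀ u, functional u • vector ≤ u

namespace DeltaPair

variable {K : Type u} [IdemSemiring K]
  {V : Type v} [AddCommMonoid V] [PartialOrder V] [Module K V]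

/-- The functional of a pair, as a point of `Δ(V)`. -/
def deltaFunctional (m : DeltaPair K V) : DeltaSet K V :=
  ⟨m.functional, m.isBLinearMap, m.vector, m.smul_le⟩

/-- The one-dimensional operator attached to a pair; it lies below the identity. -/
def oneDim (m : DeltaPair K V) (v : V) : V :=
  m.functional v • m.vector

/-- The composition of the functional `χ` with the operator `m.oneDim`, in the form it takes for
homogeneous `χ`. -/
def component (χ : V → K) (m : DeltaPair K V) (v : V) : K :=
  m.functional v * χ m.vector

/-- The set `M` of pairs decomposes the functional `χ` as the supremum of its components. -/
def IsSupport (χ : V → K) (M : Set (DeltaPair K V)) : Prop :=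
  ∀ v, IsLUB ((component χ · v) '' M) (χ v)

theorem component_le {χ : V → K} (hχ : IsBLinearMap K χ) (m : DeltaPair K V) (v : V) :
    component χ m v ≤ χ v := by
  simpa only [component, hχ.map_smul, smul_eq_mul] using hχ.monotone (m.smul_le v)

theorem isLUB_oneDim_of_isBNuclearMap_id (hid : IsBNuclearMap K (id : V → V)) (v : V) :
    IsLUB (range fun m : DeltaPair K V => m.oneDim v) v := by
  obtain ⟨G, hG, hlub⟩ := hid
  refine ⟨forall_mem_range.2 fun m => m.smul_le v, fun b hb => (hlub v).2.2 ?_⟩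
  rintro _ ⟨g, hg, rfl⟩
  obtain ⟨φ, w, hφ, hgφ⟩ := hG g hg
  have hle (u : V) : φ u • w ≤ u := hgφ u ▸ (hlub u).2.1 (mem_image_of_mem _ hg)
  exact (hgφ v).trans_le (hb ⟨⟨φ, hφ, w, hle⟩, rfl⟩)

theorem isSupport_univ (hV : IsCanonicalOrder V)
    (hgen : ∀ v, IsLUB (range fun m : DeltaPair K V => m.oneDim v) v)
    {χ : V → K} (hχ : IsBLinearMap K χ) : IsSupport χ (univ : Set (DeltaPair K V)) := by
  intro v
  have : Nonempty (DeltaPair K V) :=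
    ⟨⟨0, .zero, 0, fun u => (zero_smul K 0).trans_le (hV.zero_le u)⟩⟩
  have hlub := hχ.map_lub _ (range_nonempty _) (hgen v).bddAbove v (hgen v)
  rw [← image_univ, image_image] at hlub
  simpa only [oneDim, component, hχ.map_smul, smul_eq_mul] using hlub

-- If the sums `component χ m₀ + component χ m` took fewer values than `M` has elements, then `m₀`
-- and one representative `m` for each value would form a smaller support.
theorem mk_le_mk_image_component_add {χ : V → K} {M : Set (DeltaPair K V)}
    (hM : MinimalFor (IsSupport χ) (fun M => #M) M) (hinf : M.Infinite) {m₀ : DeltaPair K V}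
    (hm₀ : m₀ ∈ M) : #M ≤ #((fun m => component χ m₀ + component χ m) '' M) := by
  by_contra! hlt
  obtain ⟨N, hNM, hN⟩ := exists_subset_bijOn M fun m => component χ m₀ + component χ m
  have hsub : insert m₀ N ⊆ M := insert_subset hm₀ hNM
  have hcard : #(insert m₀ N : Set (DeltaPair K V)) < #M := by
    have hM₀ : ℵ₀ ≤ #M := infinite_iff.1 hinf.to_subtype
    refine mk_insert_le.trans_lt (add_lt_of_lt hM₀ ?_ (one_lt_aleph0.trans_le hM₀))
    exact ((mk_image_eq_of_injOn _ _ hN.injOn).symm.trans (by rw [hN.image_eq])).trans_lt hlt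
  refine (hM.le (j := insert m₀ N) fun v => ⟨?_, fun b hb => (hM.1 v).2 ?_⟩).not_gt hcard
  · exact upperBounds_mono_set (image_mono hsub) (hM.1 v).1
  · rintro _ ⟨m, hm, rfl⟩
    obtain ⟨n, hn, hnm⟩ := hN.surjOn (mem_image_of_mem _ hm)
    calc component χ m v ≤ component χ m₀ v + component χ m v :=
          isCanonicalOrder_idemSemiring.le_add_left _ _
      _ = component χ m₀ v + component χ n v := (congrFun hnm v).symm
      _ ≤ b := isCanonicalOrder_idemSemiring.add_le (hb ⟨m₀, mem_insert m₀ N, rfl⟩)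
          (hb ⟨n, mem_insert_of_mem m₀ hn, rfl⟩)

/-- Replace the functional of `m` by the sum of its components at `m'` and `m''`. -/
def variant (hmul : IsMulRightLUBPreserving K) (hV : IsCanonicalOrder V)
    (m m' m'' : DeltaPair K V) : DeltaPair K V where
  functional := component m.functional m' + component m.functional m''
  isBLinearMap := (m'.isBLinearMap.mul_const hmul _).add isCanonicalOrder_idemSemiring
    (m''.isBLinearMap.mul_const hmul _)
  vector := m.vector
  smul_le u :=
    (hV.smul_le_smul_right (isCanonicalOrder_idemSemiring.add_le
      (component_le m.isBLinearMap m' u) (component_le m.isBLinearMap m'' u)) _).trans (m.smul_le u)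

/-- The refinement system on delta pairs determined by a choice of supports of minimal
cardinality. -/
def refinementSystem (hmul : IsMulRightLUBPreserving K) (hV : IsCanonicalOrder V)
    (M : DeltaSet K V → Set (DeltaPair K V))
    (hM : ∀ χ, MinimalFor (IsSupport χ.1) (fun M => #M) (M χ)) :
    RefinementSystem (DeltaPair K V) (DeltaSet K V) where
  lead := deltaFunctional
  support := M
  variants m m' := variant hmul hV m m' '' M m.deltaFunctional
  mk_variants_le _ _ _ := mk_image_le
  mk_support_le m hinf m' hm' := by
    refine (mk_le_mk_image_component_add (hM _) hinf hm').trans ?_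
    have himage : (fun m'' => component m.functional m' + component m.functional m'') ''
        M m.deltaFunctional =
        (fun φ : DeltaSet K V => φ.1) ''
          (deltaFunctional '' (variant hmul hV m m' '' M m.deltaFunctional)) := by
      rw [image_image, image_image]
      rfl
    exact himage ▸ mk_image_le

theorem isViable_not_oneDim_le (hmul : IsMulRightLUBPreserving K) (hV : IsCanonicalOrder V)
    (hact : IsSMulLUBPreserving K V) (M : DeltaSet K V → Set (DeltaPair K V))
    (hM : ∀ χ, MinimalFor (IsSupport χ.1) (fun M => #M) (M χ)) (v b : V) :
    (refinementSystem hmul hV M hM).IsViable {m | ¬ m.oneDim v ≤ b} := by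
  intro m hm
  have hlub := (hM m.deltaFunctional).1 v
  have hne : (M m.deltaFunctional).Nonempty := by
    rw [nonempty_iff_ne_empty]
    intro hempty
    rw [hempty, image_empty] at hlub
    have hzero : m.functional v ≤ 0 := hlub.2 (by simp)
    exact hm ((hV.smul_le_smul_right hzero _).trans ((zero_smul K _).trans_le (hV.zero_le b)))
  have hlub_smul := hact m.vector _ _ (hne.image _) hlub
  obtain ⟨m', hm', hnot⟩ :
      ∃ m' ∈ M m.deltaFunctional, ¬ component m.functional m' v • m.vector ≤ b := by
    by_contra! hall
    exact hm (hlub_smul.2 (forall_mem_image.2 (forall_mem_image.2 hall)))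
  refine ⟨m', hm', fun hle => hnot ?_, ?_⟩
  · rw [component, mul_smul]
    exact (hV.smul_le_smul_left _ (m.smul_le m'.vector)).trans hle
  · rintro _ ⟨m'', -, rfl⟩ hle
    exact hnot <|
      (hV.smul_le_smul_right (isCanonicalOrder_idemSemiring.le_add_right _ _) _).trans hle

end DeltaPair

end DeltaPair

section Kernel

variable {K : Type*} [IdemSemiring K] {V : Type*} [AddCommMonoid V] [PartialOrder V] [Module K V]

/-- `k` represents the identity operator of `V` integrally over `Δ(V)`. -/
def IsDeltaKernel (k : DeltaSet K V → V) : Prop :=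
  ∀ v, IsLUB (range fun φ : DeltaSet K V => φ.1 v • k φ) v

open DeltaPair in
theorem exists_isDeltaKernel (hmul : IsMulRightLUBPreserving K) (hV : IsCanonicalOrder V)
    (hact : IsSMulLUBPreserving K V)
    (hgen : ∀ v, IsLUB (range fun m : DeltaPair K V => m.oneDim v) v) :
    ∃ k : DeltaSet K V → V, IsDeltaKernel k := by
  choose M hM using fun χ : DeltaSet K V =>
    exists_minimalFor_of_wellFoundedLT (IsSupport χ.1) (fun M => Cardinal.mk M)
      ⟨univ, isSupport_univ hV hgen χ.2.1⟩
  obtain ⟨D, hfin, hmeet⟩ :=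
    (refinementSystem hmul hV M hM).hasFiniteTransversal_viableSubsets univ
  have hbound (φ : DeltaSet K V) : ∃ w, (∀ u, φ.1 u • w ≤ u) ∧
      w ∈ upperBounds (vector '' {m ∈ D | m.deltaFunctional = φ}) := by
    refine exists_admissible_upperBound hV φ.1 ((hfin φ).image vector) ?_
    rintro _ ⟨m, ⟨-, rfl⟩, rfl⟩
    exact m.smul_le
  choose k hk hkD using hbound
  refine ⟨k, fun v => ⟨forall_mem_range.2 fun φ => hk φ v, fun b hb => (hgen v).2 ?_⟩⟩
  rintro _ ⟨m, rfl⟩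
  by_contra hm
  obtain ⟨n, hnb, hnD⟩ := hmeet {m | ¬ m.oneDim v ≤ b}
    ⟨subset_univ _, ⟨m, hm⟩, isViable_not_oneDim_le hmul hV hact M hM v b⟩
  have hnk : n.vector ≤ k n.deltaFunctional := hkD _ (mem_image_of_mem vector ⟨hnD, rfl⟩)
  exact hnb ((hV.smul_le_smul_left _ hnk).trans (hb (mem_range_self n.deltaFunctional)))

theorem IsDeltaKernel.isBNuclearMap_id {k : DeltaSet K V → V} (hk : IsDeltaKernel k) :
    IsBNuclearMap K (id : V → V) := by
  refine ⟨range fun φ v => φ.1 v • k φ, ?_, fun v => ?_⟩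
  · rintro _ ⟨φ, rfl⟩
    exact ⟨φ.1, k φ, φ.2.1, fun _ => rfl⟩
  · rw [← range_comp]
    exact ⟨(hk v).bddAbove, hk v⟩

theorem isBNuclearMap_id_iff_exists_isDeltaKernel
    (hmul : IsMulRightLUBPreserving K) (hV : IsCanonicalOrder V)
    (hact : IsSMulLUBPreserving K V) :
    IsBNuclearMap K (id : V → V) ↔ ∃ k : DeltaSet K V → V, IsDeltaKernel k :=
  ⟨fun hid => exists_isDeltaKernel hmul hV hact (DeltaPair.isLUB_oneDim_of_isBNuclearMap_id hid),
    fun ⟨_, hk⟩ => hk.isBNuclearMap_id⟩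

theorem iDelta_monotone : Monotone (iDelta K V) :=
  fun _ _ hvw φ => φ.2.1.monotone hvw

theorem iDelta_smul (c : K) (v : V) : iDelta K V (c • v) = c • iDelta K V v :=
  funext fun φ => φ.2.1.map_smul c v

theorem IsDeltaKernel.iDelta_le_iDelta_iff (hV : IsCanonicalOrder V) {k : DeltaSet K V → V}
    (hk : IsDeltaKernel k) (v w : V) : iDelta K V v ≤ iDelta K V w ↔ v ≤ w := by
  refine ⟨fun hle => (hk v).2 (forall_mem_range.2 fun φ => ?_), fun h => iDelta_monotone h⟩
  exact (hV.smul_le_smul_right (hle φ) _).trans ((hk w).1 (mem_range_self φ))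

theorem isLUBWithin_range_image_iff {α β : Type*} [Preorder α] [Preorder β] {f : α → β}
    (hf : ∀ x y, f x ≤ f y ↔ x ≤ y) {s : Set α} {a : α} :
    IsLUBWithin (range f) (f '' s) (f a) ↔ IsLUB s a := by
  simp [IsLUBWithin, IsLUB, IsLeast, mem_upperBounds, mem_lowerBounds, hf]

theorem isDeltaKernel_iff_isLUBWithin (hord : ∀ v w : V, iDelta K V v ≤ iDelta K V w ↔ v ≤ w)
    {k : DeltaSet K V → V} :
    IsDeltaKernel k ↔ ∀ F ∈ range (iDelta K V),
      IsLUBWithin (range (iDelta K V)) (range fun φ => F φ • iDelta K V (k φ)) F := by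
  rw [forall_mem_range]
  refine forall_congr' fun v => ?_
  have himage : (range fun φ => iDelta K V v φ • iDelta K V (k φ)) =
      iDelta K V '' range fun φ : DeltaSet K V => φ.1 v • k φ := by
    simp only [← range_comp, Function.comp_def, iDelta_smul]
    rfl
  rw [himage, isLUBWithin_range_image_iff hord]

theorem exists_isDeltaKernel_iff (hV : IsCanonicalOrder V) :
    (∃ k : DeltaSet K V → V, IsDeltaKernel k) ↔
      ((Function.Injective (iDelta K V) ∧
          ∀ v w : V, iDelta K V v ≤ iDelta K V w ↔ v ≤ w) ∧
        IsIntegralSelf (range (iDelta K V)) (fun F => F)) := by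
  constructor
  · rintro ⟨k, hk⟩
    have hord := hk.iDelta_le_iDelta_iff hV
    refine ⟨⟨fun v w h => ?_, hord⟩, fun φ => iDelta K V (k φ), fun φ => mem_range_self _,
      (isDeltaKernel_iff_isLUBWithin hord).1 hk⟩
    exact ((hord v w).1 h.le).antisymm ((hord w v).1 h.ge)
  · rintro ⟨⟨-, hord⟩, kernel, hrange, hkernel⟩
    choose k hk using hrange
    obtain rfl : (fun φ => iDelta K V (k φ)) = kernel := funext hk
    exact ⟨k, (isDeltaKernel_iff_isLUBWithin hord).2 hkernel⟩

end Kernel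

theorem id_bNuclear_iff_iDelta_embedding_and_Id_integral_general {K : Type*} [IdemSemiring K]
    {V : Type*} [AddCommMonoid V] [PartialOrder V] [Module K V]
    (hmul : IsMulRightLUBPreserving K) (hV : IsCanonicalOrder V)
    (hact : IsSMulLUBPreserving K V) :
    IsBNuclearMap K (id : V → V) ↔
      ((Function.Injective (iDelta K V) ∧
          ∀ v w : V, iDelta K V v ≤ iDelta K V w ↔ v ≤ w) ∧
        IsIntegralSelf (Set.range (iDelta K V)) (fun F => F)) :=
  (isBNuclearMap_id_iff_exists_isDeltaKernel hmul hV hact).trans (exists_isDeltaKernel_iff hV)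

/-- **Proposition 4.** Let `V` be a b-complete semimodule over a b-complete idempotent
semiring `K`, `Δ(V)` the set of δ-functionals on `V` and `i_Δ : V → K(Δ(V))` the natural
map `(i_Δ v) φ = φ v`. Then the identity operator of `V` is b-nuclear iff `i_Δ` is an
embedding (injective and an order isomorphism onto its image `i_Δ(V)`) and the identity
operator of `i_Δ(V)` is integral. -/
theorem id_bNuclear_iff_iDelta_embedding_and_Id_integral {K : Type*} [IdemSemiring K]
    {V : Type*} [AddCommMonoid V] [PartialOrder V] [Module K V]
    (hK : IsBCompleteSemiring K) (hV : IsBCompleteSemimodule K V) :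
    IsBNuclearMap K (id : V → V) ↔
      ((Function.Injective (iDelta K V) ∧
          ∀ v w : V, iDelta K V v ≤ iDelta K V w ↔ v ≤ w) ∧
        IsIntegralSelf (Set.range (iDelta K V)) (fun F => F)) :=
  id_bNuclear_iff_iDelta_embedding_and_Id_integral_general hK.mul_right_lub hV.le_iff_add
    fun w s a hs ha => hV.act_lub w s a hs ha.bddAbove ha
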